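/- Let I ⊆ ℝ be an interval and let p, b, a : I → ℂ be differentiable with |p(t)| < 1 for all t ∈ I, satisfying i p' = (N − (1−|p|²)E)p + a·conj(b), i b' = (N+E)b + E·a·conj(p), i a' = (N−E)a − E|p|²·b·p, where E(t) = |b(t)p(t)+a(t)|²/(1−|p(t)|²)² and N(t) = |b(t)|² + (1−|p(t)|²)E(t), and set S(t) = (N+E)|p|² + (E/2)|p|⁴ + 2Re(a·conj(b)·conj(p)). Then the real function x(t) := |p(t)|² satisfies, for all t ∈ I, the equation x'(t)² + c_0 + c_1 x + c_2 x² + c_3 x³ + c_4 x⁴ = 0 with c_4 = −(7/4)E², c_3 = 3E² − NE, c_2 = N² + 2NE − 3E² + 3ES, c_1 = 4E² + 2NS − 4NE − 6ES, c_0 = S². -/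

import Mathlib

open ComplexConjugate

/-- `E = |bp+a|² / (1-|p|²)²`, evaluated pointwise in time. -/
noncomputable def Etr (p b a : ℝ → ℂ) (t : ℝ) : ℝ :=
  ‖b t * p t + a t‖ ^ 2 / (1 - ‖p t‖ ^ 2) ^ 2

/-- `N = |b|² + (1-|p|²) E`, evaluated pointwise in time. -/
noncomputable def Ntr (p b a : ℝ → ℂ) (t : ℝ) : ℝ :=
  ‖b t‖ ^ 2 + (1 - ‖p t‖ ^ 2) * Etr p b a t

/-- `S = (N+E)|p|² + (E/2)|p|⁴ + 2 Re(a conj(b) conj(p))`, evaluated pointwise. -/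
noncomputable def Str (p b a : ℝ → ℂ) (t : ℝ) : ℝ :=
  (Ntr p b a t + Etr p b a t) * ‖p t‖ ^ 2 + (Etr p b a t / 2) * ‖p t‖ ^ 4
    + 2 * (a t * conj (b t) * conj (p t)).re

/-- Along solutions of the truncated Szegő `L(1)` ODE system, `x = |p|²` obeys
`x'² + c₀ + c₁ x + c₂ x² + c₃ x³ + c₄ x⁴ = 0` with
`c₄ = -(7/4)E²`, `c₃ = 3E² - NE`, `c₂ = N² + 2NE - 3E² + 3ES`,
`c₁ = 4E² + 2NS - 4NE - 6ES`, `c₀ = S²`. -/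
theorem truncated_szego_L1_effective_potential (I : Set ℝ) (hI : I.OrdConnected)
    (p b a : ℝ → ℂ)
    (hp : ∀ t ∈ I, DifferentiableAt ℝ p t)
    (hb : ∀ t ∈ I, DifferentiableAt ℝ b t)
    (ha : ∀ t ∈ I, DifferentiableAt ℝ a t)
    (hp1 : ∀ t ∈ I, ‖p t‖ < 1)
    (hode : ∀ t ∈ I,
      Complex.I * deriv p t =
        ((Ntr p b a t - (1 - ‖p t‖ ^ 2) * Etr p b a t : ℝ) : ℂ) * p t
          + a t * conj (b t) ∧
      Complex.I * deriv b t =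
        ((Ntr p b a t + Etr p b a t : ℝ) : ℂ) * b t
          + (Etr p b a t : ℂ) * a t * conj (p t) ∧
      Complex.I * deriv a t =
        ((Ntr p b a t - Etr p b a t : ℝ) : ℂ) * a t
          - ((Etr p b a t * ‖p t‖ ^ 2 : ℝ) : ℂ) * b t * p t) :
    ∀ t ∈ I,
      (deriv (fun τ : ℝ => ‖p τ‖ ^ 2) t) ^ 2
        + (Str p b a t) ^ 2
        + (4 * (Etr p b a t) ^ 2 + 2 * Ntr p b a t * Str p b a t
            - 4 * Ntr p b a t * Etr p b a t - 6 * Etr p b a t * Str p b a t)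
          * ‖p t‖ ^ 2
        + ((Ntr p b a t) ^ 2 + 2 * Ntr p b a t * Etr p b a t - 3 * (Etr p b a t) ^ 2
            + 3 * Etr p b a t * Str p b a t) * (‖p t‖ ^ 2) ^ 2
        + (3 * (Etr p b a t) ^ 2 - Ntr p b a t * Etr p b a t) * (‖p t‖ ^ 2) ^ 3
        + (-(7 / 4) * (Etr p b a t) ^ 2) * (‖p t‖ ^ 2) ^ 4 = 0 := by
  intro t ht
  have hd := ((hp t ht).hasDerivAt.norm_sq).deriv
  have hO := (hode t ht).1
  have hlt := hp1 t ht
  have hne : (1 - ‖p t‖ ^ 2) ^ 2 ≠ 0 := by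
    have h0 := norm_nonneg (p t)
    have : 0 < 1 - ‖p t‖ ^ 2 := by nlinarith
    positivity
  have hE : Etr p b a t * (1 - ‖p t‖ ^ 2) ^ 2 = ‖b t * p t + a t‖ ^ 2 := by
    unfold Etr
    exact div_mul_cancel₀ _ hne
  have hN : Ntr p b a t = ‖b t‖ ^ 2 + (1 - ‖p t‖ ^ 2) * Etr p b a t := rfl
  have hS : Str p b a t = (Ntr p b a t + Etr p b a t) * ‖p t‖ ^ 2
    + (Etr p b a t / 2) * (‖p t‖ ^ 2) ^ 2 + 2 * (a t * conj (b t) * conj (p t)).re := by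
    unfold Str
    ring
  rw [hd]
  generalize Etr p b a t = E at *
  generalize Ntr p b a t = N at *
  generalize Str p b a t = S at *
  generalize deriv p t = q at *
  generalize p t = P at *
  generalize b t = B at *
  generalize a t = A at *
  have hx' : 2 * inner ℝ P q = 2 * (A * conj B * conj P).im := by
    generalize N - (1 - ‖P‖ ^ 2) * E = r at hO
    have h1 := congrArg Complex.re hO
    have h2 := congrArg Complex.im hO
    simp [Complex.inner] at h1 h2 ⊢
    linear_combination P.re * h2 - P.im * h1
  have hz : (A * conj B * conj P).re ^ 2 + (A * conj B * conj P).im ^ 2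
      = ‖A‖ ^ 2 * ‖B‖ ^ 2 * ‖P‖ ^ 2 := by
    simp only [← Complex.normSq_eq_norm_sq, Complex.normSq_apply]
    simp
    ring
  have hs : ‖B * P + A‖ ^ 2 = ‖B‖ ^ 2 * ‖P‖ ^ 2 + ‖A‖ ^ 2 + 2 * (A * conj B * conj P).re := by
    simp only [← Complex.normSq_eq_norm_sq, Complex.normSq_apply]
    simp
    ring
  rw [hs] at hE
  rw [hx']
  generalize (A * conj B * conj P).re = u at *
  generalize (A * conj B * conj P).im = v at *
  generalize ‖P‖ ^ 2 = x at *
  have hB : ‖B‖ ^ 2 = N - (1 - x) * E := by linarith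
  have hu : 2 * u = S - (N + E) * x - E / 2 * x ^ 2 := by linarith
  have hA : ‖A‖ ^ 2 = E - S + E / 2 * x ^ 2 := by
    rw [hB] at hE
    linear_combination -hE - hu
  rw [hA, hB] at hz
  linear_combination 4 * hz - (2 * u + (S - (N + E) * x - E / 2 * x ^ 2)) * hu
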